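/- Linear recursion relations: under these hypotheses, the generators M_n := M_{1,n} satisfy the left recursion Σ_{j=0}^{r+1} (−1)^j·C_j·M_{m-j} = 0 for all m ∈ ℤ, and also the right recursion Σ_{j=0}^{r+1} (−1)^j·q^{−j}·M_{m-j}·C_j = 0 for all m ∈ ℤ. -/

import Mathlib

/-- ξ_{α,n} := M_{α,n} · M_{α,n+1}⁻¹ -/
def xiv {R : Type*} [Ring R] (M Mi : ℕ → ℤ → R) (α : ℕ) (n : ℤ) : R :=
  M α n * Mi α (n + 1)

/-- ξ_{α,n}⁻¹ = M_{α,n+1} · M_{α,n}⁻¹ -/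
def xivInv {R : Type*} [Ring R] (M Mi : ℕ → ℤ → R) (α : ℕ) (n : ℤ) : R :=
  M α (n + 1) * Mi α n

/-- x_{α,n} := ξ_{α,n}⁻¹ · ξ_{α-1,n} -/
def xv {R : Type*} [Ring R] (M Mi : ℕ → ℤ → R) (α : ℕ) (n : ℤ) : R :=
  xivInv M Mi α n * xiv M Mi (α - 1) n

/-- The Miura coefficient C_{m,n} = Σ_{r+1 ≥ α₁ > ⋯ > α_m ≥ 1}
∏_{j=1}^m x_{α_j, n+(r+1-α_j)-(j-1)} (ordered product, j increasing left to right). -/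
def CMiura {R : Type*} [Ring R] (M Mi : ℕ → ℤ → R) (r : ℕ) (m : ℕ) (n : ℤ) : R :=
  ∑ S ∈ Finset.powersetCard m (Finset.Icc 1 (r + 1)),
    (((S.sort (· ≤ ·)).reverse.zipIdx).map
      (fun ji => xv M Mi ji.1 (n + ((r : ℤ) + 1 - (ji.1 : ℤ)) - (ji.2 : ℤ)))).prod

/-!
The ratios `y_{a,n} = M_{a+1,n} M_{a,n}⁻¹` turn the system into a discrete Toda chain:
`x_{a+1,n} = y_{a,n+1} y_{a,n}⁻¹`, and the `M`-system becomes the conservation law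
`x_{a,n} - x_{a,n+1} = e_{a,n} - e_{a-1,n+1}` with flux `e_{a+1,n} = y_{a+1,n+1} y_{a,n}⁻¹`.
Since `e_{a,n+1} x_{a,n} = x_{a+1,n+1} e_{a,n}` by telescoping, the flux intertwines the Miura
operator `(D - x_N) ⋯ (D - x_1)` with its translate; it vanishes at both ends of the chain, so the
Miura coefficients do not depend on `n`. The rightmost factor `D - x_1` annihilates `M_{1,n}`, which
is the left recursion. The right recursion is the same computation with coefficients on the right,
where `M_{1,k}` has to be moved past `x_{a+1,n}`: this is possible because it commutes with the
neighbouring `y_{a,n}`.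
-/

section Combinatorics

theorem reverse_sort_le {α : Type*} [LinearOrder α] (s : Finset α) :
    (s.sort (· ≤ ·)).reverse = s.sort (· ≥ ·) := by
  have hperm : (s.sort (· ≥ ·)).Perm (s.sort (· ≤ ·)) :=
    (s.sort_perm_toList _).trans (s.sort_perm_toList _).symm
  have hle : (s.sort (· ≤ ·)).SortedLE := s.sortedLT_sort.sortedLE
  have hge : (s.sort (· ≥ ·)).SortedGE := s.sortedGT_sort.sortedGE
  rw [hperm.symm.eq_reverse_of_sortedLE_of_sortedGE hle hge, List.reverse_reverse]

theorem sum_powersetCard_succ_insert {α β : Type*} [DecidableEq α] [AddCommMonoid β]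
    {a : α} {s : Finset α} (ha : a ∉ s) (m : ℕ) (f : Finset α → β) :
    ∑ S ∈ (insert a s).powersetCard (m + 1), f S =
      ∑ S ∈ s.powersetCard (m + 1), f S + ∑ S ∈ s.powersetCard m, f (insert a S) := by
  have notMem : ∀ {k : ℕ}, ∀ S ∈ s.powersetCard k, a ∉ S := fun S hS h =>
    ha ((Finset.mem_powersetCard.1 hS).1 h)
  rw [Finset.powersetCard_succ_insert ha, Finset.sum_union, Finset.sum_image]
  · intro S hS T hT hST
    rw [← Finset.erase_insert (notMem S hS), ← Finset.erase_insert (notMem T hT), hST]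
  · rw [Finset.disjoint_left]
    intro S hS hS'
    obtain ⟨T, _, rfl⟩ := Finset.mem_image.1 hS'
    exact notMem _ hS (Finset.mem_insert_self a T)

end Combinatorics

section MiuraOperator

variable {R : Type*} [Ring R] (x : ℕ → ℤ → R)

/-- The operator `(D - x_N) ⋯ (D - x_1)` on sequences `ℤ → R`, where `D` is the shift
`n ↦ n + 1` and `x_a` multiplies a sequence by `x a n` from the left. -/
def miuraOperator : ℕ → (ℤ → R) → ℤ → R
  | 0, f => f
  | N + 1, f => fun n => miuraOperator N f (n + 1) - x (N + 1) n * miuraOperator N f n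

theorem miuraOperator_succ (N : ℕ) (f : ℤ → R) (n : ℤ) :
    miuraOperator x (N + 1) f n =
      miuraOperator x N f (n + 1) - x (N + 1) n * miuraOperator x N f n :=
  rfl

/-- The coefficient `C_m` of `(-1)^m D^(N-m)` in `(D - x_N) ⋯ (D - x_1)`, for an arbitrary sequence
`x` and an arbitrary number `N` of factors. -/
def miuraCoeff (N m : ℕ) (n : ℤ) : R :=
  ∑ S ∈ (Finset.Icc 1 N).powersetCard m,
    ((S.sort (· ≥ ·)).zipIdx.map fun αj => x αj.1 (n + (N - αj.1) - αj.2)).prod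

theorem CMiura_eq_miuraCoeff (M Mi : ℕ → ℤ → R) (r m : ℕ) (n : ℤ) :
    CMiura M Mi r m n = miuraCoeff (xv M Mi) (r + 1) m n := by
  simp only [CMiura, miuraCoeff, reverse_sort_le, Nat.cast_add, Nat.cast_one]

@[simp]
theorem miuraCoeff_zero (N : ℕ) (n : ℤ) : miuraCoeff x N 0 n = 1 := by
  simp [miuraCoeff]

theorem miuraCoeff_eq_zero_of_lt {N m : ℕ} (h : N < m) (n : ℤ) : miuraCoeff x N m n = 0 := by
  rw [miuraCoeff, Finset.powersetCard_eq_empty.2 (by simpa using h), Finset.sum_empty]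

theorem miuraCoeff_succ_succ (N m : ℕ) (n : ℤ) :
    miuraCoeff x (N + 1) (m + 1) n =
      miuraCoeff x N (m + 1) (n + 1) + x (N + 1) n * miuraCoeff x N m n := by
  have index_succ (α j : ℕ) :
      n + ((N + 1 : ℕ) - α : ℤ) - (j + 1 : ℕ) = n + (N - α) - j := by push_cast; ring
  have sort_insert : ∀ S ∈ (Finset.Icc 1 N).powersetCard m,
      (insert (N + 1) S).sort (· ≥ ·) = (N + 1) :: S.sort (· ≥ ·) := by
    intro S hS
    have lt_succ : ∀ b ∈ S, b < N + 1 := fun b hb =>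
      Nat.lt_succ_of_le (Finset.mem_Icc.1 ((Finset.mem_powersetCard.1 hS).1 hb)).2
    exact Finset.sort_insert _ (fun b hb => (lt_succ b hb).le) fun h => (lt_succ _ h).false
  have hIcc : Finset.Icc 1 (N + 1) = insert (N + 1) (Finset.Icc 1 N) :=
    (Finset.insert_Icc_right_eq_Icc_succ (Nat.succ_pos N)).symm
  rw [miuraCoeff, hIcc, sum_powersetCard_succ_insert (by simp), miuraCoeff, miuraCoeff,
    Finset.mul_sum]
  congr 1
  · refine Finset.sum_congr rfl fun S _ => ?_
    congr! 4
    push_cast; ring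
  · refine Finset.sum_congr rfl fun S hS => ?_
    rw [sort_insert S hS, List.zipIdx_cons', List.map_cons, List.prod_cons, List.map_map]
    simp only [Function.comp_def, Prod.map_fst, Prod.map_snd, id_eq, index_succ, sub_self,
      Nat.cast_zero, add_zero, sub_zero]

theorem sum_miuraCoeff_succ {V : Type*} [AddCommMonoid V] (φ : ℕ → R →+ V) (N : ℕ) (n : ℤ) :
    ∑ j ∈ Finset.range (N + 2), φ j (miuraCoeff x (N + 1) j n) =
      ∑ j ∈ Finset.range (N + 1), φ j (miuraCoeff x N j (n + 1)) +
        ∑ j ∈ Finset.range (N + 1), φ (j + 1) (x (N + 1) n * miuraCoeff x N j n) := by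
  have last_eq_zero : φ (N + 1) (miuraCoeff x N (N + 1) (n + 1)) = 0 := by
    rw [miuraCoeff_eq_zero_of_lt x N.lt_succ_self, map_zero]
  rw [Finset.sum_range_succ', ← add_zero (∑ j ∈ Finset.range (N + 1), φ j _), ← last_eq_zero,
    ← Finset.sum_range_succ (fun j => φ j (miuraCoeff x N j (n + 1))),
    Finset.sum_range_succ' _ (N + 1)]
  simp only [miuraCoeff_succ_succ, map_add, Finset.sum_add_distrib, miuraCoeff_zero]
  abel

theorem miuraOperator_eq_sum (N : ℕ) (f : ℤ → R) (n : ℤ) :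
    miuraOperator x N f n =
      ∑ j ∈ Finset.range (N + 1), (-1) ^ j * miuraCoeff x N j n * f (n + N - j) := by
  induction N generalizing n with
  | zero => simp [miuraOperator]
  | succ N ih =>
    have expand := sum_miuraCoeff_succ x (fun j =>
      (AddMonoidHom.mulRight (f (n + (N + 1 : ℕ) - j))).comp
        (AddMonoidHom.mulLeft ((-1 : R) ^ j))) N n
    simp only [AddMonoidHom.comp_apply, AddMonoidHom.coe_mulLeft, AddMonoidHom.coe_mulRight]
      at expand
    rw [miuraOperator_succ, ih, ih, expand, sub_eq_add_neg, Finset.mul_sum,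
      ← Finset.sum_neg_distrib]
    congr 1 <;> refine Finset.sum_congr rfl fun j _ => ?_
    · congr 2; push_cast; ring
    · have index_succ : n + (N + 1 : ℕ) - (j + 1 : ℕ) = n + N - j := by push_cast; ring
      have sign_comm : x (N + 1) n * (-1) ^ j = (-1) ^ j * x (N + 1) n :=
        ((Commute.neg_one_right _).pow_right j).eq
      rw [index_succ, pow_succ, mul_neg_one, ← mul_assoc, ← mul_assoc, sign_comm]
      noncomm_ring

theorem miuraOperator_single (N m : ℕ) (n : ℤ) :
    miuraOperator x N (Pi.single (n + N - m) 1) n = (-1) ^ m * miuraCoeff x N m n := by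
  rw [miuraOperator_eq_sum, Finset.sum_eq_single m]
  · simp
  · intro j _ hj
    rw [Pi.single_eq_of_ne (by omega), mul_zero]
  · intro hm
    rw [miuraCoeff_eq_zero_of_lt x (by simpa using hm), mul_zero, zero_mul]

theorem miuraOperator_succ_eq_zero {f : ℤ → R} (hf : ∀ n, f (n + 1) = x 1 n * f n)
    (N : ℕ) (n : ℤ) : miuraOperator x (N + 1) f n = 0 := by
  induction N generalizing n with
  | zero => simp [miuraOperator, hf]
  | succ N ih => rw [miuraOperator_succ, ih, ih, mul_zero, sub_zero]

theorem sum_mul_miuraCoeff_succ {f : ℤ → R} {s : R} (hs : ∀ y, Commute s y) (N : ℕ) (n : ℤ)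
    (hcomm : ∀ k, n ≤ k → k ≤ n + N → Commute (x (N + 1) n) (f k)) :
    ∑ j ∈ Finset.range (N + 2),
        (-s) ^ j * f (n + (N + 1 : ℕ) - j) * miuraCoeff x (N + 1) j n =
      ∑ j ∈ Finset.range (N + 1), (-s) ^ j * f (n + 1 + N - j) * miuraCoeff x N j (n + 1) -
        s * x (N + 1) n *
          ∑ j ∈ Finset.range (N + 1), (-s) ^ j * f (n + N - j) * miuraCoeff x N j n := by
  have expand := sum_miuraCoeff_succ x
    (fun j => AddMonoidHom.mulLeft ((-s) ^ j * f (n + (N + 1 : ℕ) - j))) N n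
  simp only [AddMonoidHom.coe_mulLeft] at expand
  rw [expand, sub_eq_add_neg, ← neg_mul, ← neg_mul, Finset.mul_sum]
  congr 1 <;> refine Finset.sum_congr rfl fun j hj => ?_
  · congr 3; push_cast; ring
  · have index_succ : n + (N + 1 : ℕ) - (j + 1 : ℕ) = n + N - j := by push_cast; ring
    have hj : j < N + 1 := Finset.mem_range.1 hj
    have comm_f := hcomm (n + N - j) (by omega) (by omega)
    have comm_s : Commute (x (N + 1) n) ((-s) ^ j) := (hs _).symm.neg_right.pow_right j
    rw [index_succ, pow_succ', mul_assoc (-s), mul_assoc (-s), mul_assoc (-s),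
      ← mul_assoc _ (x _ _), ← (comm_s.mul_right comm_f).eq, mul_assoc]

theorem sum_mul_miuraCoeff_eq_zero {f : ℤ → R} {s : R} (hs : ∀ y, Commute s y)
    (hf : ∀ n, f (n + 1) = s * f n * x 1 n) (N : ℕ)
    (hcomm : ∀ (a : ℕ) (n k : ℤ), 1 ≤ a → a ≤ N → n ≤ k → k ≤ n + a →
      Commute (x (a + 1) n) (f k)) (n : ℤ) :
    ∑ j ∈ Finset.range (N + 2),
      (-s) ^ j * f (n + (N + 1 : ℕ) - j) * miuraCoeff x (N + 1) j n = 0 := by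
  induction N generalizing n with
  | zero => simp [Finset.sum_range_succ, miuraCoeff_succ_succ, miuraCoeff_eq_zero_of_lt, hf]
  | succ N ih =>
    replace ih := ih fun a n k ha haN => hcomm a n k ha (by omega)
    rw [sum_mul_miuraCoeff_succ x hs (N + 1) n fun k => hcomm (N + 1) n k (by omega) le_rfl,
      ih, ih, mul_zero, sub_zero]

end MiuraOperator

section ConservationLaw

variable {R : Type*} [Ring R] {x e : ℕ → ℤ → R}

theorem miuraOperator_apply_add_one (he : ∀ n, e 0 n = 0) (N : ℕ)
    (hsub : ∀ a < N, ∀ n, x (a + 1) n - x (a + 1) (n + 1) = e (a + 1) n - e a (n + 1))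
    (hmul : ∀ a < N, ∀ n, e a (n + 1) * x a n = x (a + 1) (n + 1) * e a n)
    (f : ℤ → R) (n : ℤ) :
    miuraOperator x N f (n + 1) = miuraOperator x N (fun k => f (k + 1)) n +
      e N n * miuraOperator x (N - 1) (fun k => f (k + 1)) n := by
  induction N generalizing n with
  | zero => simp [miuraOperator, he]
  | succ N ih =>
    replace ih := ih (fun a ha => hsub a (by omega)) (fun a ha => hmul a (by omega))
    set g : ℤ → R := fun k => f (k + 1)
    have fold : e N (n + 1) * (miuraOperator x (N - 1) g (n + 1) -
        x N n * miuraOperator x (N - 1) g n) = e N (n + 1) * miuraOperator x N g n := by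
      cases N with
      | zero => simp [he]
      | succ N => rfl
    have flux : e (N + 1) n = x (N + 1) n - x (N + 1) (n + 1) + e N (n + 1) := by
      rw [hsub N N.lt_succ_self n, sub_add_cancel]
    calc miuraOperator x (N + 1) f (n + 1)
      _ = miuraOperator x N g (n + 1) - x (N + 1) (n + 1) * miuraOperator x N g n +
          (e N (n + 1) * miuraOperator x (N - 1) g (n + 1) -
            x (N + 1) (n + 1) * e N n * miuraOperator x (N - 1) g n) := by
        rw [miuraOperator_succ, ih, ih]; noncomm_ring
      _ = miuraOperator x N g (n + 1) - x (N + 1) (n + 1) * miuraOperator x N g n +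
          e N (n + 1) * miuraOperator x N g n := by
        rw [← hmul N N.lt_succ_self, ← fold]; noncomm_ring
      _ = miuraOperator x (N + 1) g n + e (N + 1) n * miuraOperator x N g n := by
        rw [flux, miuraOperator_succ]; noncomm_ring

theorem miuraCoeff_eq_miuraCoeff_zero (he : ∀ n, e 0 n = 0) {N : ℕ} (heN : ∀ n, e N n = 0)
    (hsub : ∀ a < N, ∀ n, x (a + 1) n - x (a + 1) (n + 1) = e (a + 1) n - e a (n + 1))
    (hmul : ∀ a < N, ∀ n, e a (n + 1) * x a n = x (a + 1) (n + 1) * e a n)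
    (m : ℕ) (n : ℤ) : miuraCoeff x N m n = miuraCoeff x N m 0 := by
  have periodic : Function.Periodic (miuraCoeff x N m) 1 := by
    intro n
    have shift_single : (fun k : ℤ => (Pi.single (n + 1 + N - m) 1 : ℤ → R) (k + 1)) =
        Pi.single (n + N - m) 1 := by
      funext k
      simp only [Pi.single_apply]
      congr 1
      grind
    have h := miuraOperator_apply_add_one he N hsub hmul (Pi.single (n + 1 + N - m) 1) n
    rw [shift_single, heN, zero_mul, add_zero, miuraOperator_single, miuraOperator_single] at h
    exact (isUnit_one.neg.pow m).mul_left_cancel h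
  simpa using periodic.int_mul n 0

end ConservationLaw

section ThreeTermRelation

variable {R : Type*} [Ring R] {s w : R}

theorem forward_ratio_sub_of_three_term {a b : Rˣ} {c : R} (hs : ∀ y, Commute s y)
    (hab : (a * b : R) = s * b * a) (hsys : s * c * a = (b : R) ^ 2 - w) :
    b * ↑a⁻¹ - c * ↑b⁻¹ = w * ↑b⁻¹ * ↑a⁻¹ := by
  have h : c * ↑b⁻¹ * (a * b : R) = (b : R) ^ 2 - w := by
    rw [hab, ← hsys, (hs b).eq]
    simp [mul_assoc, (hs _).eq]
  refine (a * b).isUnit.mul_right_cancel ?_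
  rw [Units.val_mul, sub_mul, h]
  simp [mul_assoc, sq]

theorem backward_ratio_sub_of_three_term {b c : Rˣ} {a v d : R} (hs : IsUnit s)
    (hbc : (b * c : R) = s * c * b) (hvc : v * c = s * c * v)
    (hsys : s * c * a = (b : R) ^ 2 - v * d) :
    a * ↑b⁻¹ - b * ↑c⁻¹ = -(v * ↑c⁻¹ * d * ↑b⁻¹) := by
  have ratio : s * c * (b * ↑c⁻¹) = b := by rw [← mul_assoc, ← hbc, Units.mul_inv_cancel_right]
  have move : s * c * (v * ↑c⁻¹) = v := by rw [← mul_assoc, ← hvc, Units.mul_inv_cancel_right]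
  refine (hs.mul c.isUnit).mul_left_cancel ?_
  calc s * c * (a * ↑b⁻¹ - b * ↑c⁻¹)
    _ = (b ^ 2 - v * d) * ↑b⁻¹ - b := by rw [mul_sub, ratio, ← mul_assoc, hsys]
    _ = -(v * d * ↑b⁻¹) := by rw [sub_mul, sq, Units.mul_inv_cancel_right]; abel
    _ = s * c * -(v * ↑c⁻¹ * d * ↑b⁻¹) := by
      rw [mul_neg, ← mul_assoc, ← mul_assoc, move]

end ThreeTermRelation

section LevelRatio

variable {R : Type*} [Ring R]

/-- The ratio `y_{a,n} = M_{a+1,n} M_{a,n}⁻¹` of consecutive levels, the Toda variable in which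
`x_{a+1,n} = y_{a,n+1} y_{a,n}⁻¹`. -/
def levelRatio (M Mi : ℕ → ℤ → R) (a : ℕ) (n : ℤ) : R :=
  M (a + 1) n * Mi a n

/-- The inverse `M_{a,n} M_{a+1,n}⁻¹` of `levelRatio M Mi a n`. -/
def levelRatioInv (M Mi : ℕ → ℤ → R) (a : ℕ) (n : ℤ) : R :=
  M a n * Mi (a + 1) n

/-- The flux `e_{a+1,n} = y_{a+1,n+1} y_{a,n}⁻¹` in the conservation law satisfied by `x_{a,n}`,
with `e_{0,n} = 0` at the end of the chain. -/
def todaFlux (M Mi : ℕ → ℤ → R) : ℕ → ℤ → R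
  | 0, _ => 0
  | a + 1, n => levelRatio M Mi (a + 1) (n + 1) * levelRatioInv M Mi a n

end LevelRatio

/-- The quantum `M`-system of type `A_r` with its commutation relations between neighbouring times;
`Mi α n` is the inverse of `M α n` for `α ≤ r + 1`. -/
structure IsQuantumMSystem {R : Type*} [Ring R] (q : Rˣ) (r : ℕ) (M Mi : ℕ → ℤ → R) : Prop where
  q_central : ∀ y : R, (q : R) * y = y * (q : R)
  zero_eq_one : ∀ n : ℤ, M 0 n = 1
  top_eq_zero : ∀ n : ℤ, M (r + 2) n = 0
  mul_inv : ∀ (α : ℕ) (n : ℤ), α ≤ r + 1 → M α n * Mi α n = 1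
  inv_mul : ∀ (α : ℕ) (n : ℤ), α ≤ r + 1 → Mi α n * M α n = 1
  m_system : ∀ (α : ℕ) (n : ℤ), 1 ≤ α → α ≤ r + 1 →
    (q : R) ^ α * M α (n + 1) * M α (n - 1) = M α n ^ 2 - M (α + 1) n * M (α - 1) n
  commutation : ∀ (α β ε : ℕ) (n : ℤ), ε ≤ 1 → α ≤ r + 1 → β ≤ r + 1 →
    M α n * M β (n + (ε : ℤ)) = (q : R) ^ (ε * min α β) * M β (n + (ε : ℤ)) * M α n

/-- The commutation relations between times `n` and `n + p` with `|p| ≤ |β - α| + 1`. -/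
def ExtendedCommutation {R : Type*} [Ring R] (q : Rˣ) (r : ℕ) (M : ℕ → ℤ → R) : Prop :=
  ∀ (α β : ℕ) (n p : ℤ), α ≤ r + 1 → β ≤ r + 1 → |p| ≤ |(β : ℤ) - (α : ℤ)| + 1 →
    M α n * M β (n + p) = ((q ^ (p * ((min α β : ℕ) : ℤ)) : Rˣ) : R) * M β (n + p) * M α n

namespace IsQuantumMSystem

variable {R : Type*} [Ring R] {q : Rˣ} {r : ℕ} {M Mi : ℕ → ℤ → R}

/-- `M α n` as a unit, for the levels `α ≤ r + 1` at which it is invertible. -/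
def unit (h : IsQuantumMSystem q r M Mi) {α : ℕ} (hα : α ≤ r + 1) (n : ℤ) : Rˣ :=
  ⟨M α n, Mi α n, h.mul_inv α n hα, h.inv_mul α n hα⟩

theorem inv_zero_eq_one (h : IsQuantumMSystem q r M Mi) (n : ℤ) : Mi 0 n = 1 := by
  simpa [h.zero_eq_one] using h.mul_inv 0 n (Nat.zero_le _)

theorem pow_central (h : IsQuantumMSystem q r M Mi) (k : ℕ) (y : R) : Commute ((q : R) ^ k) y :=
  Commute.pow_left (h.q_central y) k

theorem commute (h : IsQuantumMSystem q r M Mi) {α β : ℕ} (hα : α ≤ r + 1) (hβ : β ≤ r + 1)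
    (n : ℤ) : Commute (M α n) (M β n) := by
  simpa [commute_iff_eq] using h.commutation α β 0 n zero_le_one hα hβ

theorem commute_inv (h : IsQuantumMSystem q r M Mi) {α β : ℕ} (hα : α ≤ r + 1)
    (hβ : β ≤ r + 1) (n : ℤ) : Commute (M α n) (Mi β n) :=
  (h.commute hα hβ n).units_inv_right (u := h.unit hβ n)

theorem semiconjBy (h : IsQuantumMSystem q r M Mi) {α β : ℕ} (hα : α ≤ r + 1) (hβ : β ≤ r + 1)
    (n : ℤ) : SemiconjBy (M α n) (M β (n + 1)) ((q : R) ^ min α β * M β (n + 1)) := by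
  simpa [SemiconjBy] using h.commutation α β 1 n le_rfl hα hβ

theorem levelRatio_mul_levelRatioInv (h : IsQuantumMSystem q r M Mi) {a : ℕ} (ha : a ≤ r)
    (n : ℤ) : levelRatio M Mi a n * levelRatioInv M Mi a n = 1 := by
  rw [levelRatio, levelRatioInv, mul_assoc, ← mul_assoc (Mi a n), h.inv_mul a n (by omega),
    one_mul, h.mul_inv (a + 1) n (by omega)]

theorem levelRatioInv_mul_levelRatio (h : IsQuantumMSystem q r M Mi) {a : ℕ} (ha : a ≤ r)
    (n : ℤ) : levelRatioInv M Mi a n * levelRatio M Mi a n = 1 := by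
  rw [levelRatio, levelRatioInv, mul_assoc, ← mul_assoc (Mi (a + 1) n),
    h.inv_mul (a + 1) n (by omega), one_mul, h.mul_inv a n (by omega)]

theorem commute_levelRatioInv_of_semiconjBy (h : IsQuantumMSystem q r M Mi) {a : ℕ} (ha : a ≤ r)
    {n : ℤ} {y z : R} (hya : SemiconjBy (M a n) y z) (hya' : SemiconjBy (M (a + 1) n) y z) :
    Commute (levelRatioInv M Mi a n) y := by
  rw [levelRatioInv, (h.commute_inv (by omega) (by omega) n).eq]
  exact SemiconjBy.mul_left
    (SemiconjBy.units_inv_symm_left (a := h.unit (by omega : a + 1 ≤ r + 1) n) hya') hya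

theorem commute_levelRatioInv (h : IsQuantumMSystem q r M Mi) {a : ℕ} (ha : a ≤ r) (n : ℤ) :
    Commute (levelRatioInv M Mi a n) (M a (n + 1)) := by
  have hself := h.semiconjBy (α := a) (β := a) (by omega) (by omega) n
  have hnext := h.semiconjBy (α := a + 1) (β := a) (by omega) (by omega) n
  rw [min_self] at hself
  rw [min_eq_right a.le_succ] at hnext
  exact h.commute_levelRatioInv_of_semiconjBy ha hself hnext

theorem xv_succ_eq (h : IsQuantumMSystem q r M Mi) {a : ℕ} (ha : a ≤ r) (n : ℤ) :
    xv M Mi (a + 1) n = levelRatio M Mi a (n + 1) * levelRatioInv M Mi a n := by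
  have hcomm : Commute (levelRatioInv M Mi a n) (Mi a (n + 1)) :=
    (h.commute_levelRatioInv ha n).units_inv_right (u := h.unit (by omega) (n + 1))
  calc xv M Mi (a + 1) n
    _ = M (a + 1) (n + 1) * (Mi (a + 1) n * M a n) * Mi a (n + 1) := by
      simp only [xv, xivInv, xiv, Nat.add_sub_cancel, mul_assoc]
    _ = M (a + 1) (n + 1) * (levelRatioInv M Mi a n * Mi a (n + 1)) := by
      rw [← (h.commute_inv (by omega) (by omega) n).eq, ← levelRatioInv, mul_assoc]
    _ = levelRatio M Mi a (n + 1) * levelRatioInv M Mi a n := by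
      rw [hcomm.eq, levelRatio, mul_assoc]

theorem m_system_succ (h : IsQuantumMSystem q r M Mi) {a : ℕ} (ha : a ≤ r) (n : ℤ) :
    (q : R) ^ (a + 1) * M (a + 1) (n + 1 + 1) * M (a + 1) n =
      M (a + 1) (n + 1) ^ 2 - M (a + 2) (n + 1) * M a (n + 1) := by
  simpa using h.m_system (a + 1) (n + 1) (by omega) (by omega)

theorem xivInv_sub_xivInv_mul_xiv (h : IsQuantumMSystem q r M Mi) {a : ℕ} (ha : a ≤ r) (n : ℤ) :
    (xivInv M Mi (a + 1) n - xivInv M Mi (a + 1) (n + 1)) * xiv M Mi a n =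
      todaFlux M Mi (a + 1) n := by
  have ha' : a + 1 ≤ r + 1 := by omega
  have hself := (h.semiconjBy ha' ha' n).eq
  rw [min_self] at hself
  have hdiff : xivInv M Mi (a + 1) n - xivInv M Mi (a + 1) (n + 1) =
      M (a + 2) (n + 1) * M a (n + 1) * Mi (a + 1) (n + 1) * Mi (a + 1) n :=
    forward_ratio_sub_of_three_term (a := h.unit ha' n) (b := h.unit ha' (n + 1))
      (h.pow_central (a + 1)) hself (h.m_system_succ ha n)
  calc (xivInv M Mi (a + 1) n - xivInv M Mi (a + 1) (n + 1)) * xiv M Mi a n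
    _ = M (a + 2) (n + 1) * (M a (n + 1) * Mi (a + 1) (n + 1)) * (Mi (a + 1) n * M a n) *
          Mi a (n + 1) := by rw [hdiff, xiv]; simp only [mul_assoc]
    _ = M (a + 2) (n + 1) * Mi (a + 1) (n + 1) * (M a (n + 1) * levelRatioInv M Mi a n) *
          Mi a (n + 1) := by
      rw [(h.commute_inv (by omega) ha' (n + 1)).eq, ← (h.commute_inv (by omega) ha' n).eq,
        levelRatioInv]
      simp only [mul_assoc]
    _ = levelRatio M Mi (a + 1) (n + 1) * levelRatioInv M Mi a n *
          (M a (n + 1) * Mi a (n + 1)) := by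
      rw [← (h.commute_levelRatioInv ha n).eq, levelRatio]
      simp only [mul_assoc]
    _ = todaFlux M Mi (a + 1) n := by
      rw [h.mul_inv a (n + 1) (by omega), mul_one, todaFlux]

theorem xivInv_mul_xiv_sub_xiv (h : IsQuantumMSystem q r M Mi) {a : ℕ} (ha : a + 1 ≤ r) (n : ℤ) :
    xivInv M Mi (a + 2) (n + 1) * (xiv M Mi (a + 1) n - xiv M Mi (a + 1) (n + 1)) =
      -todaFlux M Mi (a + 1) (n + 1) := by
  have ha' : a + 1 ≤ r + 1 := by omega
  have hself := (h.semiconjBy ha' ha' (n + 1)).eq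
  have hnext := (h.semiconjBy (by omega : a + 2 ≤ r + 1) ha' (n + 1)).eq
  rw [min_self] at hself
  rw [min_eq_right (Nat.le_succ _)] at hnext
  have hdiff : xiv M Mi (a + 1) n - xiv M Mi (a + 1) (n + 1) =
      -(M (a + 2) (n + 1) * Mi (a + 1) (n + 1 + 1) * M a (n + 1) * Mi (a + 1) (n + 1)) :=
    backward_ratio_sub_of_three_term (b := h.unit ha' (n + 1)) (c := h.unit ha' (n + 1 + 1))
      (q.isUnit.pow (a + 1)) hself hnext (h.m_system_succ (by omega) n)
  calc xivInv M Mi (a + 2) (n + 1) * (xiv M Mi (a + 1) n - xiv M Mi (a + 1) (n + 1))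
    _ = -(M (a + 2) (n + 1 + 1) * (Mi (a + 2) (n + 1) * M (a + 2) (n + 1)) *
          Mi (a + 1) (n + 1 + 1) * (M a (n + 1) * Mi (a + 1) (n + 1))) := by
      rw [hdiff, xivInv, mul_neg]; simp only [mul_assoc]
    _ = -todaFlux M Mi (a + 1) (n + 1) := by
      rw [h.inv_mul (a + 2) (n + 1) (by omega), mul_one, todaFlux, levelRatio, levelRatioInv]

theorem xv_sub_xv_eq_todaFlux_sub (h : IsQuantumMSystem q r M Mi) :
    ∀ a < r + 1, ∀ n, xv M Mi (a + 1) n - xv M Mi (a + 1) (n + 1) =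
      todaFlux M Mi (a + 1) n - todaFlux M Mi a (n + 1) := by
  intro a ha n
  have htime : xivInv M Mi (a + 1) (n + 1) * (xiv M Mi a n - xiv M Mi a (n + 1)) =
      -todaFlux M Mi a (n + 1) := by
    cases a with
    | zero => simp [xiv, todaFlux, h.zero_eq_one, h.inv_zero_eq_one]
    | succ a => exact h.xivInv_mul_xiv_sub_xiv (by omega) n
  rw [sub_eq_add_neg (todaFlux _ _ _ _), ← htime, ← h.xivInv_sub_xivInv_mul_xiv (by omega), xv, xv,
    Nat.add_sub_cancel]
  noncomm_ring

theorem todaFlux_mul_xv (h : IsQuantumMSystem q r M Mi) :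
    ∀ a < r + 1, ∀ n, todaFlux M Mi a (n + 1) * xv M Mi a n =
      xv M Mi (a + 1) (n + 1) * todaFlux M Mi a n := by
  intro a ha n
  cases a with
  | zero => simp [todaFlux]
  | succ a =>
    calc todaFlux M Mi (a + 1) (n + 1) * xv M Mi (a + 1) n
      _ = levelRatio M Mi (a + 1) (n + 1 + 1) *
            (levelRatioInv M Mi a (n + 1) * levelRatio M Mi a (n + 1)) *
            levelRatioInv M Mi a n := by
        rw [h.xv_succ_eq (by omega), todaFlux]; simp only [mul_assoc]
      _ = levelRatio M Mi (a + 1) (n + 1 + 1) *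
            (levelRatioInv M Mi (a + 1) (n + 1) * levelRatio M Mi (a + 1) (n + 1)) *
            levelRatioInv M Mi a n := by
        rw [h.levelRatioInv_mul_levelRatio (by omega), h.levelRatioInv_mul_levelRatio (by omega)]
      _ = xv M Mi (a + 2) (n + 1) * todaFlux M Mi (a + 1) n := by
        rw [h.xv_succ_eq (by omega), todaFlux]; simp only [mul_assoc]

theorem CMiura_eq_CMiura_zero (h : IsQuantumMSystem q r M Mi) (m : ℕ) (n : ℤ) :
    CMiura M Mi r m n = CMiura M Mi r m 0 := by
  have top_flux (n : ℤ) : todaFlux M Mi (r + 1) n = 0 := by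
    rw [todaFlux, levelRatio, h.top_eq_zero, zero_mul, zero_mul]
  simpa only [CMiura_eq_miuraCoeff] using
    miuraCoeff_eq_miuraCoeff_zero (fun _ => rfl) top_flux h.xv_sub_xv_eq_todaFlux_sub
      h.todaFlux_mul_xv m n

theorem xv_one_eq (h : IsQuantumMSystem q r M Mi) (n : ℤ) :
    xv M Mi 1 n = M 1 (n + 1) * Mi 1 n := by
  simp [xv, xiv, xivInv, h.zero_eq_one, h.inv_zero_eq_one]

theorem left_recursion (h : IsQuantumMSystem q r M Mi) (m : ℤ) :
    ∑ j ∈ Finset.range (r + 2), (-1 : R) ^ j * CMiura M Mi r j 0 * M 1 (m - (j : ℤ)) = 0 := by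
  have hM (n : ℤ) : M 1 (n + 1) = xv M Mi 1 n * M 1 n := by
    rw [h.xv_one_eq, mul_assoc, h.inv_mul 1 n (by omega), mul_one]
  have hsum := miuraOperator_succ_eq_zero (xv M Mi) hM r (m - (r + 1 : ℕ))
  simpa only [miuraOperator_eq_sum, ← CMiura_eq_miuraCoeff, h.CMiura_eq_CMiura_zero,
    sub_add_cancel] using hsum

theorem commute_levelRatioInv_one (h : IsQuantumMSystem q r M Mi)
    (hext : ExtendedCommutation q r M) {a : ℕ} (ha₁ : 1 ≤ a) (ha : a ≤ r) {n k : ℤ}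
    (hk : |k - n| ≤ a) : Commute (levelRatioInv M Mi a n) (M 1 k) := by
  have semiconj : ∀ β : ℕ, a ≤ β → β ≤ r + 1 →
      SemiconjBy (M β n) (M 1 k) (((q ^ (k - n) : Rˣ) : R) * M 1 k) := by
    intro β haβ hβ
    have hp : |k - n| ≤ |((1 : ℕ) : ℤ) - β| + 1 := by grind
    simpa [SemiconjBy, min_eq_right (ha₁.trans haβ)] using hext β 1 n (k - n) hβ (by omega) hp
  exact h.commute_levelRatioInv_of_semiconjBy ha (semiconj a le_rfl (by omega))
    (semiconj (a + 1) (by omega) (by omega))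

theorem commute_xv_one (h : IsQuantumMSystem q r M Mi) (hext : ExtendedCommutation q r M)
    {a : ℕ} (ha₁ : 1 ≤ a) (ha : a ≤ r) {n k : ℤ} (hnk : n ≤ k) (hkn : k ≤ n + a) :
    Commute (xv M Mi (a + 1) n) (M 1 k) := by
  let y : Rˣ := ⟨levelRatio M Mi a (n + 1), levelRatioInv M Mi a (n + 1),
    h.levelRatio_mul_levelRatioInv ha _, h.levelRatioInv_mul_levelRatio ha _⟩
  have hnow : Commute (levelRatioInv M Mi a n) (M 1 k) :=
    h.commute_levelRatioInv_one hext ha₁ ha (by grind)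
  have hnext : Commute (levelRatio M Mi a (n + 1)) (M 1 k) :=
    Commute.units_inv_left_iff (u := y).1 (h.commute_levelRatioInv_one hext ha₁ ha (by grind))
  rw [h.xv_succ_eq ha]
  exact hnext.mul_left hnow

theorem right_recursion (h : IsQuantumMSystem q r M Mi) (hext : ExtendedCommutation q r M)
    (m : ℤ) :
    ∑ j ∈ Finset.range (r + 2),
      (-1 : R) ^ j * ((q ^ (-(j : ℤ)) : Rˣ) : R) * M 1 (m - (j : ℤ)) * CMiura M Mi r j 0 = 0 := by
  have q_inv_central (y : R) : Commute ((q⁻¹ : Rˣ) : R) y :=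
    Commute.units_inv_left (h.q_central y)
  have hM (n : ℤ) : M 1 (n + 1) = ((q⁻¹ : Rˣ) : R) * M 1 n * xv M Mi 1 n := by
    have hq := (h.semiconjBy (α := 1) (β := 1) (by omega) (by omega) n).eq
    rw [h.xv_one_eq, mul_assoc, ← mul_assoc (M 1 n), hq, mul_assoc, h.mul_inv 1 n (by omega)]
    simp
  have hsum := sum_mul_miuraCoeff_eq_zero (xv M Mi) q_inv_central hM r
    (fun _ _ _ ha₁ ha => h.commute_xv_one hext ha₁ ha) (m - (r + 1 : ℕ))
  simp only [← CMiura_eq_miuraCoeff, h.CMiura_eq_CMiura_zero, sub_add_cancel] at hsum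
  simpa only [zpow_neg, zpow_natCast, ← inv_pow, Units.val_pow_eq_pow_val, ← neg_pow] using hsum

end IsQuantumMSystem

theorem quantum_Q_linear_recursion
    {R : Type*} [Ring R] (q A Δ : Rˣ)
    (hq : ∀ x : R, (q : R) * x = x * (q : R))
    (r : ℕ) (hr : 1 ≤ r)
    (M Mi : ℕ → ℤ → R)
    (hM0 : ∀ n : ℤ, M 0 n = 1)
    (hMtop : ∀ n : ℤ, M (r + 2) n = 0)
    (hMiL : ∀ (α : ℕ) (n : ℤ), α ≤ r + 1 → M α n * Mi α n = 1)
    (hMiR : ∀ (α : ℕ) (n : ℤ), α ≤ r + 1 → Mi α n * M α n = 1)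
    (hMsys : ∀ (α : ℕ) (n : ℤ), 1 ≤ α → α ≤ r + 1 →
      (q : R) ^ α * M α (n + 1) * M α (n - 1) = M α n ^ 2 - M (α + 1) n * M (α - 1) n)
    (hcom : ∀ (α β ε : ℕ) (n : ℤ), ε ≤ 1 → α ≤ r + 1 → β ≤ r + 1 →
      M α n * M β (n + (ε : ℤ)) = (q : R) ^ (ε * min α β) * M β (n + (ε : ℤ)) * M α n)
    (hAΔ : ∀ n : ℤ, M (r + 1) n = ((A ^ n : Rˣ) : R) * (Δ : R))
    (hΔM : ∀ (α : ℕ) (n : ℤ), 1 ≤ α → α ≤ r + 1 →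
      (Δ : R) * M α n = ((q ^ ((α : ℤ) * n) : Rˣ) : R) * M α n * (Δ : R))
    (hAM : ∀ (α : ℕ) (n : ℤ), 1 ≤ α → α ≤ r + 1 →
      (A : R) * M α n = ((q ^ (-(α : ℤ)) : Rˣ) : R) * M α n * (A : R))
    (hΔA : (Δ : R) * (A : R) = (q : R) ^ (r + 1) * (A : R) * (Δ : R))
    (hext : ∀ (α β : ℕ) (n p : ℤ), α ≤ r + 1 → β ≤ r + 1 →
      |p| ≤ |(β : ℤ) - (α : ℤ)| + 1 →
      M α n * M β (n + p) = ((q ^ (p * ((min α β : ℕ) : ℤ)) : Rˣ) : R) * M β (n + p) * M α n) :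
    ∀ m : ℤ,
      (∑ j ∈ Finset.range (r + 2), (-1 : R) ^ j * CMiura M Mi r j 0 * M 1 (m - (j : ℤ))) = 0
      ∧ (∑ j ∈ Finset.range (r + 2),
          (-1 : R) ^ j * ((q ^ (-(j : ℤ)) : Rˣ) : R) * M 1 (m - (j : ℤ)) * CMiura M Mi r j 0) = 0 := by
  have h : IsQuantumMSystem q r M Mi := ⟨hq, hM0, hMtop, hMiL, hMiR, hMsys, hcom⟩
  exact fun m => ⟨h.left_recursion m, h.right_recursion hext m⟩
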